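/- Let A be a finite-dimensional left Leibniz algebra over a field F and let H be a Cartan subalgebra of A. Then A = A^ω + H, where A^ω = ⋂_{i≥1} A^i is the intersection of the lower central series of A. -/

import Mathlib

open Submodule

section LeibnizDefs

variable {F : Type*} {A : Type*} [Field F] [AddCommGroup A] [Module F A]

/-- The span of all products `b*c` with `b ∈ B`, `c ∈ C`. -/
def mulSub (mul : A →ₗ[F] A →ₗ[F] A) (B C : Submodule F A) : Submodule F A :=
  Submodule.span F {z : A | ∃ b ∈ B, ∃ c ∈ C, mul b c = z}

/-- `fSub mul B C = B·C + C·B`, the function `f(B,C)`. -/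
def fSub (mul : A →ₗ[F] A →ₗ[F] A) (B C : Submodule F A) : Submodule F A :=
  mulSub mul B C ⊔ mulSub mul C B

/-- `fIter mul B C n = f^{n+1}(B,C)` (so index `0` is `f^1(B,C) = f(B,C)`). -/
def fIter (mul : A →ₗ[F] A →ₗ[F] A) (B C : Submodule F A) : ℕ → Submodule F A
  | 0 => fSub mul B C
  | n + 1 => fSub mul B (fIter mul B C n)

/-- `lcs mul B n = B^{n+1}`, the lower central series (index `0` is `B^1 = B`). -/
def lcs (mul : A →ₗ[F] A →ₗ[F] A) (B : Submodule F A) : ℕ → Submodule F A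
  | 0 => B
  | n + 1 => mulSub mul B (lcs mul B n)

/-- `ds mul B n = B^{(n+1)}`, the derived series (index `0` is `B^{(1)} = B`). -/
def ds (mul : A →ₗ[F] A →ₗ[F] A) (B : Submodule F A) : ℕ → Submodule F A
  | 0 => B
  | n + 1 => mulSub mul (ds mul B n) (ds mul B n)

/-- `B^ω = ⋂_{i ≥ 1} B^i`. -/
def omegaSub (mul : A →ₗ[F] A →ₗ[F] A) (B : Submodule F A) : Submodule F A :=
  ⨅ n, lcs mul B n

/-- `B` is a subalgebra: a subspace closed under multiplication. -/
def IsSubalg (mul : A →ₗ[F] A →ₗ[F] A) (B : Submodule F A) : Prop :=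
  ∀ x ∈ B, ∀ y ∈ B, mul x y ∈ B

/-- `I` is an ideal of the subalgebra `S`: `I ⊆ S` and `xI + Ix ⊆ I` for all `x ∈ S`. -/
def IsIdealIn (mul : A →ₗ[F] A →ₗ[F] A) (I S : Submodule F A) : Prop :=
  I ≤ S ∧ ∀ x ∈ S, ∀ y ∈ I, mul x y ∈ I ∧ mul y x ∈ I

/-- `B` is subinvariant in `S`: there is a chain of subalgebras
`B = c 0 ⊆ c 1 ⊆ ⋯ ⊆ c t = S` with each term an ideal of the next. -/
def IsSubinvariantIn (mul : A →ₗ[F] A →ₗ[F] A) (B S : Submodule F A) : Prop :=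
  ∃ (t : ℕ) (c : ℕ → Submodule F A), c 0 = B ∧ c t = S ∧
    (∀ i ≤ t, IsSubalg mul (c i)) ∧ ∀ i < t, IsIdealIn mul (c i) (c (i + 1))

/-- `B` is nilpotent: `B^m = 0` for some `m`. -/
def IsNilpotentSub (mul : A →ₗ[F] A →ₗ[F] A) (B : Submodule F A) : Prop :=
  ∃ m, lcs mul B m = ⊥

/-- `B` is solvable: `B^{(m)} = 0` for some `m`. -/
def IsSolvableSub (mul : A →ₗ[F] A →ₗ[F] A) (B : Submodule F A) : Prop :=
  ∃ m, ds mul B m = ⊥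

/-- The centralizer `Z_A(B) = {x : xb = 0 = bx for all b ∈ B}`. -/
def centralizerSet (mul : A →ₗ[F] A →ₗ[F] A) (B : Submodule F A) : Set A :=
  {x : A | ∀ b ∈ B, mul x b = 0 ∧ mul b x = 0}

/-- `R` is the radical (the maximal solvable ideal) of the subalgebra `S`. -/
def IsRadicalIn (mul : A →ₗ[F] A →ₗ[F] A) (S R : Submodule F A) : Prop :=
  IsIdealIn mul R S ∧ IsSolvableSub mul R ∧
    ∀ T, IsIdealIn mul T S → IsSolvableSub mul T → T ≤ R

/-- `N` is the nilradical (the maximal nilpotent ideal) of the subalgebra `S`. -/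
def IsNilradicalIn (mul : A →ₗ[F] A →ₗ[F] A) (S N : Submodule F A) : Prop :=
  IsIdealIn mul N S ∧ IsNilpotentSub mul N ∧
    ∀ T, IsIdealIn mul T S → IsNilpotentSub mul T → T ≤ N

/-- `H` is a Cartan subalgebra: a nilpotent self-normalizing subalgebra. -/
def IsCartan (mul : A →ₗ[F] A →ₗ[F] A) (H : Submodule F A) : Prop :=
  IsSubalg mul H ∧ IsNilpotentSub mul H ∧
    ∀ x : A, (∀ h ∈ H, mul x h ∈ H ∧ mul h x ∈ H) → x ∈ H

/-- The subalgebra generated by a set: the smallest subalgebra containing it. -/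
def subalgGen (mul : A →ₗ[F] A →ₗ[F] A) (s : Set A) : Submodule F A :=
  sInf {S : Submodule F A | IsSubalg mul S ∧ s ⊆ (S : Set A)}

end LeibnizDefs

/-!
Let `L` be the Lie algebra of left multiplications by elements of `H`; it is nilpotent because `H`
is. By Fitting, `A` is the sum of the null component `N` of `L` and of `⋂ k, Lᵏ A ⊆ A^ω`, so it
suffices to show `N ≤ H`.

Since `L` acts by derivations, `N` is a subalgebra, and it contains `H` by nilpotency. As `L` acts
nilpotently on `N`, an `L`-submodule `W ≤ N` lies in `H` as soon as every `x ∈ W` with `H x ⊆ H`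
does. Self-normalization gives this for `W = {x ∈ N | x H ⊆ H}`. It then follows for `W = N`: if
`H x ⊆ H` and `h ∈ H`, then `x h + h x` annihilates `A` from the left, hence lies in
`{x ∈ N | x H ⊆ H} ≤ H`, and so `x h ∈ H`.
-/

section LieModules

open LieModule
open scoped TensorProduct

variable {R L M M₁ M₂ M₃ : Type*} [CommRing R] [LieRing L] [LieAlgebra R L]
  [AddCommGroup M] [Module R M] [LieRingModule L M] [LieModule R L M]
  [AddCommGroup M₁] [Module R M₁] [LieRingModule L M₁] [LieModule R L M₁]
  [AddCommGroup M₂] [Module R M₂] [LieRingModule L M₂] [LieModule R L M₂]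
  [AddCommGroup M₃] [Module R M₃] [LieRingModule L M₃] [LieModule R L M₃]

theorem lieSubmodule_le_of_inf_normalizer_le {N K : LieSubmodule R L M} [IsNilpotent L N]
    (h : N ⊓ K.normalizer ≤ K) : N ≤ K := by
  have hself : (K.comap N.incl).normalizer = K.comap N.incl := by
    refine le_antisymm (fun x hx ↦ h ⟨x.2, ?_⟩) (LieSubmodule.le_normalizer _)
    rwa [← LieSubmodule.comap_normalizer] at hx
  obtain ⟨k, hk⟩ := (isNilpotent_iff_exists_ucs_eq_top R).mp ‹IsNilpotent L N›
  rw [← LieSubmodule.comap_incl_eq_top, eq_top_iff, ← hk]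
  exact LieSubmodule.ucs_le_of_normalizer_eq_self hself k

theorem lieSubmodule_le_genWeightSpace_zero [LieRing.IsNilpotent L] (N : LieSubmodule R L M)
    [IsNilpotent L N] : N ≤ genWeightSpace M (0 : L → R) := by
  obtain ⟨k, hk⟩ := N.isNilpotent_iff_exists_self_le_ucs.mp ‹_›
  exact hk.trans ((le_iSup _ k).trans (iSup_ucs_le_genWeightSpace_zero R L M))

theorem lieModuleHom_tmul_mem_genWeightSpace [LieRing.IsNilpotent L] (g : M₁ ⊗[R] M₂ →ₗ⁅R,L⁆ M₃)
    {χ₁ χ₂ : L → R} {x : M₁} {y : M₂} (hx : x ∈ genWeightSpace M₁ χ₁)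
    (hy : y ∈ genWeightSpace M₂ χ₂) : g (x ⊗ₜ y) ∈ genWeightSpace M₃ (χ₁ + χ₂) := by
  simp only [genWeightSpace, LieSubmodule.mem_iInf] at hx hy ⊢
  intro a
  exact LieModule.weight_vector_multiplication M₁ M₂ M₃ g (χ₁ a) (χ₂ a) a
    ⟨⟨x, hx a⟩ ⊗ₜ ⟨y, hy a⟩, rfl⟩

end LieModules

attribute [local instance] LieRing.ofAssociativeRing

section LeftLeibniz

open LieModule

variable {F A : Type*} [Field F] [AddCommGroup A] [Module F A] {mul : A →ₗ[F] A →ₗ[F] A}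
  {H : Submodule F A}

/-- The left Leibniz identity: every left multiplication is a derivation of `mul`. -/
def IsLeftLeibniz (mul : A →ₗ[F] A →ₗ[F] A) : Prop :=
  ∀ x y z : A, mul x (mul y z) = mul (mul x y) z + mul y (mul x z)

namespace IsLeftLeibniz

theorem mul_mul_eq_lie (hmul : IsLeftLeibniz mul) (x y : A) :
    mul (mul x y) = (⁅(mul x : Module.End F A), (mul y : Module.End F A)⁆ : Module.End F A) := by
  ext z
  simp [Ring.lie_def, hmul x y z]

theorem mul_add_swap_eq_zero (hmul : IsLeftLeibniz mul) (x y : A) :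
    mul (mul x y + mul y x) = 0 := by
  rw [map_add, hmul.mul_mul_eq_lie, hmul.mul_mul_eq_lie, ← lie_skew, neg_add_cancel]

/-- The Lie algebra of left multiplications `A → A` by the elements of a subalgebra `H`, which acts
on `A` by derivations. -/
def leftMul (hmul : IsLeftLeibniz mul) (hH : IsSubalg mul H) :
    LieSubalgebra F (Module.End F A) where
  __ := H.map mul
  lie_mem' := by
    rintro _ _ ⟨x, hx, rfl⟩ ⟨y, hy, rfl⟩
    exact ⟨mul x y, hH x hx y hy, hmul.mul_mul_eq_lie x y⟩

variable {hmul : IsLeftLeibniz mul} {hH : IsSubalg mul H}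

theorem mul_mem_of_mem_lieSubmodule (N : LieSubmodule F (hmul.leftMul hH) A) {h x : A}
    (hh : h ∈ H) (hx : x ∈ N) : mul h x ∈ N :=
  N.lie_mem (x := ⟨mul h, h, hh, rfl⟩) hx

theorem mul_mem_genWeightSpace [LieRing.IsNilpotent (hmul.leftMul hH)]
    {χ₁ χ₂ : hmul.leftMul hH → F} {x y : A} (hx : x ∈ genWeightSpace A χ₁)
    (hy : y ∈ genWeightSpace A χ₂) : mul x y ∈ genWeightSpace A (χ₁ + χ₂) := by
  let mulHom : A →ₗ⁅F, hmul.leftMul hH⁆ A →ₗ[F] A :=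
    { mul with
      map_lie' := by
        rintro ⟨_, h, -, rfl⟩ y
        ext z
        exact eq_sub_of_add_eq (hmul h y z).symm }
  exact lieModuleHom_tmul_mem_genWeightSpace
    (TensorProduct.LieModule.liftLie F (hmul.leftMul hH) A A A mulHom) hx hy

theorem lieSubmodule_lcs_le_lcs {B : Submodule F A} (hHB : H ≤ B)
    {P : LieSubmodule F (hmul.leftMul hH) A} (hPB : P.toSubmodule ≤ B) (k : ℕ) :
    (P.lcs k).toSubmodule ≤ lcs mul B k := by
  induction k with
  | zero => exact hPB
  | succ k ih =>
    rw [LieSubmodule.lcs_succ, LieSubmodule.lieIdeal_oper_eq_linear_span', span_le]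
    rintro _ ⟨⟨_, h, hh, rfl⟩, -, x, hx, rfl⟩
    exact subset_span ⟨h, hHB hh, x, ih hx, rfl⟩

theorem iInf_lowerCentralSeries_le_omegaSub :
    (⨅ k, lowerCentralSeries F (hmul.leftMul hH) A k).toSubmodule ≤ omegaSub mul ⊤ := by
  rw [LieSubmodule.iInf_toSubmodule]
  exact iInf_mono (lieSubmodule_lcs_le_lcs le_top le_top)

variable (hmul hH)

/-- A subalgebra `H`, as a module over the Lie algebra of its left multiplications. -/
def toLieSubmodule : LieSubmodule F (hmul.leftMul hH) A where
  __ := H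
  lie_mem := by
    rintro ⟨_, h, hh, rfl⟩ x hx
    exact hH h hh x hx

/-- The left normalizer `{x | x H ⊆ H}` of a subalgebra `H`. The right normalizer `{x | H x ⊆ H}`
is `(hmul.toLieSubmodule hH).normalizer`. -/
def leftNormalizer : LieSubmodule F (hmul.leftMul hH) A where
  carrier := {x | ∀ h ∈ H, mul x h ∈ H}
  add_mem' hx hy h hh := by
    rw [map_add]
    exact H.add_mem (hx h hh) (hy h hh)
  zero_mem' h _ := by simp
  smul_mem' c x hx h hh := by
    rw [map_smul]
    exact H.smul_mem c (hx h hh)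
  lie_mem := by
    rintro ⟨_, g, hg, rfl⟩ x hx h hh
    have hcomm : mul (mul g x) h = mul g (mul x h) - mul x (mul g h) :=
      eq_sub_of_add_eq (hmul g x h).symm
    exact hcomm ▸ H.sub_mem (hH g hg _ (hx h hh)) (hx _ (hH g hg h hh))

theorem isNilpotent_toLieSubmodule (hnil : IsNilpotentSub mul H) :
    IsNilpotent (hmul.leftMul hH) (hmul.toLieSubmodule hH) := by
  obtain ⟨k, hk⟩ := hnil
  refine (LieSubmodule.isNilpotent_iff_exists_lcs_eq_bot _).mpr ⟨k, ?_⟩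
  rw [← LieSubmodule.toSubmodule_eq_bot, ← le_bot_iff, ← hk]
  exact lieSubmodule_lcs_le_lcs le_rfl le_rfl k

theorem isNilpotent_leftMul (hnil : IsNilpotentSub mul H) :
    LieRing.IsNilpotent (hmul.leftMul hH) := by
  have := hmul.isNilpotent_toLieSubmodule hH hnil
  let toLeftMul : hmul.toLieSubmodule hH →ₗ[F] hmul.leftMul hH := mul.submoduleMap H
  refine Function.Surjective.lieModuleIsNilpotent (f := LieHom.id) (g := toLeftMul) ?_
    Function.surjective_id (mul.submoduleMap_surjective H)
  rintro ⟨_, h, -, rfl⟩ x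
  exact Subtype.ext (hmul.mul_mul_eq_lie h x).symm

variable {hmul hH}

theorem lieSubmodule_le_of_isNilpotent
    (hnorm : hmul.leftNormalizer hH ⊓ (hmul.toLieSubmodule hH).normalizer ≤ hmul.toLieSubmodule hH)
    (N : LieSubmodule F (hmul.leftMul hH) A) [IsNilpotent (hmul.leftMul hH) N]
    (hNH : ∀ x ∈ N, ∀ h ∈ H, mul x h ∈ N) : N ≤ hmul.toLieSubmodule hH := by
  have hleft : N ⊓ hmul.leftNormalizer hH ≤ hmul.toLieSubmodule hH := by
    have := isNilpotent_of_le F (hmul.leftMul hH) A (N ⊓ hmul.leftNormalizer hH) N inf_le_left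
    exact lieSubmodule_le_of_inf_normalizer_le
      ((inf_le_inf_right _ inf_le_right).trans hnorm)
  refine lieSubmodule_le_of_inf_normalizer_le fun x ⟨hxN, hHx⟩ ↦ hnorm ⟨fun h hh ↦ ?_, hHx⟩
  have hhx : mul h x ∈ H := hHx ⟨mul h, h, hh, rfl⟩
  have hsum : mul x h + mul h x ∈ H := by
    refine hleft ⟨N.add_mem (hNH x hxN h hh) (mul_mem_of_mem_lieSubmodule N hh hxN), ?_⟩
    intro k _
    simp [hmul.mul_add_swap_eq_zero x h]
  exact (H.add_mem_iff_left hhx).mp hsum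

end IsLeftLeibniz

theorem IsCartan.genWeightSpace_zero_le [FiniteDimensional F A] (hmul : IsLeftLeibniz mul)
    (hH : IsCartan mul H) [LieRing.IsNilpotent (hmul.leftMul hH.1)] :
    (genWeightSpace A (0 : hmul.leftMul hH.1 → F)).toSubmodule ≤ H := by
  obtain ⟨hsub, hnil, hnorm⟩ := hH
  have := hmul.isNilpotent_toLieSubmodule hsub hnil
  refine IsLeftLeibniz.lieSubmodule_le_of_isNilpotent (hmul := hmul) (hH := hsub) ?_ _ ?_
  · exact fun x ⟨hxH, hHx⟩ ↦ hnorm x fun h hh ↦ ⟨hxH h hh, hHx ⟨mul h, h, hh, rfl⟩⟩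
  · intro x hx h hh
    have hh₀ : h ∈ genWeightSpace A (0 : hmul.leftMul hsub → F) :=
      lieSubmodule_le_genWeightSpace_zero (hmul.toLieSubmodule hsub) hh
    simpa only [add_zero] using IsLeftLeibniz.mul_mem_genWeightSpace hx hh₀

end LeftLeibniz

/-- if `H` is a Cartan subalgebra of `A`, then `A = A^ω + H`. -/
theorem stmt_4 {F A : Type*} [Field F] [AddCommGroup A] [Module F A] [FiniteDimensional F A]
    (mul : A →ₗ[F] A →ₗ[F] A)
    (hleib : ∀ x y z : A, mul x (mul y z) = mul (mul x y) z + mul y (mul x z))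
    (H : Submodule F A) (hH : IsCartan mul H) :
    omegaSub mul (⊤ : Submodule F A) ⊔ H = ⊤ := by
  have hmul : IsLeftLeibniz mul := hleib
  let L := hmul.leftMul hH.1
  have : LieRing.IsNilpotent L := hmul.isNilpotent_leftMul hH.1 hH.2.1
  let A₀ := LieModule.genWeightSpace A (0 : L → F)
  let A₁ := LieModule.posFittingComp F L A
  have hnull : A₀.toSubmodule ≤ H := hH.genWeightSpace_zero_le hmul
  have hpos : A₁.toSubmodule ≤ omegaSub mul ⊤ :=
    le_trans (LieModule.posFittingComp_le_iInf_lowerCentralSeries F L A)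
      IsLeftLeibniz.iInf_lowerCentralSeries_le_omegaSub
  have hfitting : A₁.toSubmodule ⊔ A₀.toSubmodule = ⊤ := by
    rw [← LieSubmodule.sup_toSubmodule, LieSubmodule.toSubmodule_eq_top]
    exact (LieModule.isCompl_genWeightSpace_zero_posFittingComp F L A).symm.sup_eq_top
  exact top_le_iff.mp (hfitting.ge.trans (sup_le_sup hpos hnull))
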